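/- Let ξ ~ N(ν, λ²I_n) be an n-dimensional Gaussian random vector with ν ≠ 0 and λ > 0. Then the projected random vector ξ/‖ξ‖ satisfies MD(ξ/‖ξ‖) = ν/‖ν‖ and MRL(ξ/‖ξ‖) = ϱ_n(‖ν‖/λ). -/

import Mathlib

open MeasureTheory ProbabilityTheory Matrix

noncomputable section

def euclNorm {n : ℕ} (x : Fin n → ℝ) : ℝ := Real.sqrt (∑ i, x i ^ 2)

def centerMat (n : ℕ) : Matrix (Fin n) (Fin n) ℝ :=
  1 - (n : ℝ)⁻¹ • Matrix.of (fun _ _ => (1 : ℝ))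

def chi {n : ℕ} (z : Fin n → ℝ) : Fin n → ℝ :=
  (euclNorm ((centerMat n).mulVec z))⁻¹ • (centerMat n).mulVec z

def meanVec {Ω : Type*} [MeasurableSpace Ω] (P : Measure Ω) {n : ℕ}
    (X : Ω → Fin n → ℝ) : Fin n → ℝ := fun i => ∫ ω, X ω i ∂P

def covMatrix {Ω : Type*} [MeasurableSpace Ω] (P : Measure Ω) {n : ℕ}
    (X : Ω → Fin n → ℝ) : Matrix (Fin n) (Fin n) ℝ :=
  Matrix.of fun i j => ∫ ω, (X ω i - meanVec P X i) * (X ω j - meanVec P X j) ∂P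

def MRL {Ω : Type*} [MeasurableSpace Ω] (P : Measure Ω) {n : ℕ}
    (X : Ω → Fin n → ℝ) : ℝ := euclNorm (meanVec P X)

def MD {Ω : Type*} [MeasurableSpace Ω] (P : Measure Ω) {n : ℕ}
    (X : Ω → Fin n → ℝ) : Fin n → ℝ := (euclNorm (meanVec P X))⁻¹ • meanVec P X

def stdGaussianPi (n : ℕ) : Measure (Fin n → ℝ) :=
  Measure.pi fun _ => gaussianReal 0 1

def IsGaussianVec {Ω : Type*} [MeasurableSpace Ω] (P : Measure Ω) {n : ℕ}
    (Z : Ω → Fin n → ℝ) (m : Fin n → ℝ) (S : Matrix (Fin n) (Fin n) ℝ) : Prop :=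
  ∃ A : Matrix (Fin n) (Fin n) ℝ, A * Aᵀ = S ∧
    Measure.map Z P = Measure.map (fun x => m + A.mulVec x) (stdGaussianPi n)

def ascFact (a : ℝ) (k : ℕ) : ℝ := ∏ i ∈ Finset.range k, (a + i)

def kummerM (a b z : ℝ) : ℝ := ∑' k : ℕ, (ascFact a k / ascFact b k) * z ^ k / (Nat.factorial k)

def varrho (m : ℕ) (x : ℝ) : ℝ :=
  (Real.Gamma (((m : ℝ) + 1) / 2) / (Real.sqrt 2 * Real.Gamma (((m : ℝ) + 2) / 2))) * x *
    kummerM (1 / 2) (((m : ℝ) + 2) / 2) (-x ^ 2 / 2)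

def fFun (m : ℕ) (x : ℝ) : ℝ :=
  1 - (((m : ℝ) - 1) / m) * kummerM 1 ((m : ℝ) / 2 + 1) (-x ^ 2 / 2) - (varrho m x) ^ 2

def gFun (m : ℕ) (x : ℝ) : ℝ :=
  (1 / (m : ℝ)) * kummerM 1 ((m : ℝ) / 2 + 1) (-x ^ 2 / 2)

def Vmat (n : ℕ) : Matrix (Fin n) (Fin n) ℝ :=
  Matrix.of fun i j =>
    if (j : ℕ) = n - 1 then 1 / Real.sqrt n
    else if (i : ℕ) = (j : ℕ) then
      ((n : ℝ) - 1 - (j : ℕ)) / Real.sqrt (((n : ℝ) - 1 - (j : ℕ)) * ((n : ℝ) - (j : ℕ)))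
    else if (j : ℕ) < (i : ℕ) then
      -(1 / Real.sqrt (((n : ℝ) - 1 - (j : ℕ)) * ((n : ℝ) - (j : ℕ))))
    else 0

def projMat (n : ℕ) : Matrix (Fin n) (Fin n) ℝ :=
  Matrix.diagonal fun i => if (i : ℕ) < n - 1 then 1 else 0

def embedZero {n : ℕ} (v : Fin (n - 1) → ℝ) : Fin n → ℝ :=
  fun i => if h : (i : ℕ) < n - 1 then v ⟨i, h⟩ else 0

def Ximat (n : ℕ) (r : ℝ) : Matrix (Fin n) (Fin n) ℝ :=
  Matrix.of fun i j => if i = j then 1 else r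

def stdNormCDF (x : ℝ) : ℝ := (gaussianReal 0 1 (Set.Iic x)).toReal

def thetaTilde : Fin 2 → ℝ := ![Real.sqrt 2 / 2, -(Real.sqrt 2 / 2)]

/-!
Write `ξ ∼ N(m, v I)`. The factor `1 / ‖ξ‖` is removed by subordination: `‖x‖⁻¹` is a constant
times `∫₀^∞ t ^ (-1/2) exp (-t ‖x‖² / (2v)) dt`. Each factor `exp (-t ‖x‖² / (2v))` only tilts the
Gaussian law: it turns `N(m, v I)` into a multiple of `N(m / (1 + t), v / (1 + t) I)`, whose mean is
explicit. By Fubini, `E[ξ / ‖ξ‖]` is therefore `m` times an integral over `t`, and the substitution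
`u = t / (1 + t)` identifies that integral with `E[exp (z U)]` for `U ∼ Beta(1/2, (n + 1)/2)` and
`z = -‖m‖² / (2v)`. Expanding the exponential, the moments of `U` are ratios of ascending
factorials, so this expectation is Kummer's function; in particular it is positive.

The definition of a Gaussian vector allows any `A` with `A Aᵀ = v I` in `ξ ∼ m + A g`; comparing
characteristic functions reduces this to `A = √v I`, where the coordinates are independent.
-/

section AscendingFactorial

variable {a b : ℝ}

lemma ascFact_pos (ha : 0 < a) (k : ℕ) : 0 < ascFact a k :=
  Finset.prod_pos fun i _ => by positivity

lemma ascFact_succ (a : ℝ) (k : ℕ) : ascFact a (k + 1) = ascFact a k * (a + k) :=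
  Finset.prod_range_succ _ k

lemma Gamma_add_natCast (ha : 0 < a) (k : ℕ) :
    Real.Gamma (a + k) = ascFact a k * Real.Gamma a := by
  induction k with
  | zero => simp [ascFact]
  | succ k ih =>
    rw [Nat.cast_succ, ← add_assoc, Real.Gamma_add_one (by positivity), ih, ascFact_succ]
    ring

lemma beta_add_natCast (ha : 0 < a) (hb : 0 < b) (k : ℕ) :
    beta (a + k) b = ascFact a k / ascFact (a + b) k * beta a b := by
  have hab := add_pos ha hb
  have := (ascFact_pos hab k).ne'
  have := (Real.Gamma_pos_of_pos hab).ne'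
  simp only [beta, add_right_comm a (k : ℝ) b, Gamma_add_natCast ha, Gamma_add_natCast hab]
  field_simp

end AscendingFactorial

section BetaMeasure

variable {a b : ℝ}

lemma measurable_betaPDF (a b : ℝ) : Measurable (betaPDF a b) :=
  (measurable_betaPDFReal a b).ennreal_ofReal

lemma integral_betaMeasure (ha : 0 < a) (hb : 0 < b) (f : ℝ → ℝ) :
    ∫ u, f u ∂betaMeasure a b =
      (beta a b)⁻¹ * ∫ u in Set.Ioo 0 1, u ^ (a - 1) * (1 - u) ^ (b - 1) * f u := by
  have hdensity : ∀ u, (betaPDF a b u).toReal • f u = (Set.Ioo 0 1).indicator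
      (fun u => (beta a b)⁻¹ * (u ^ (a - 1) * (1 - u) ^ (b - 1) * f u)) u := by
    intro u
    by_cases hu : u ∈ Set.Ioo 0 1
    · rw [betaPDF, ENNReal.toReal_ofReal (betaPDFReal_pos hu.1 hu.2 ha hb).le, betaPDFReal,
        if_pos ⟨hu.1, hu.2⟩, Set.indicator_of_mem hu, smul_eq_mul]
      ring
    · rw [betaPDF_eq, if_neg (Set.mem_Ioo.not.1 hu), Set.indicator_of_notMem hu,
        ENNReal.ofReal_zero, ENNReal.toReal_zero, zero_smul]
  rw [betaMeasure, integral_withDensity_eq_integral_toReal_smul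
    (measurable_betaPDF a b) (ae_of_all _ fun _ => ENNReal.ofReal_lt_top)]
  simp_rw [hdensity]
  rw [integral_indicator measurableSet_Ioo, integral_const_mul]

lemma ae_mem_Ioo_betaMeasure (a b : ℝ) : ∀ᵐ u ∂betaMeasure a b, u ∈ Set.Ioo 0 1 := by
  rw [betaMeasure, ae_withDensity_iff (measurable_betaPDF a b)]
  refine ae_of_all _ fun u hu => by_contra fun hmem => hu ?_
  rw [betaPDF_eq, if_neg (Set.mem_Ioo.not.1 hmem), ENNReal.ofReal_zero]

lemma integral_betaKernel (ha : 0 < a) (hb : 0 < b) :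
    ∫ u in Set.Ioo 0 1, u ^ (a - 1) * (1 - u) ^ (b - 1) = beta a b := by
  have := isProbabilityMeasureBeta ha hb
  have h := integral_betaMeasure ha hb 1
  simp only [Pi.one_apply, integral_const, probReal_univ, smul_eq_mul, mul_one] at h
  exact ((eq_inv_mul_iff_mul_eq₀ (beta_pos ha hb).ne').1 h).symm.trans (mul_one _)

lemma integral_pow_betaMeasure (ha : 0 < a) (hb : 0 < b) (k : ℕ) :
    ∫ u, u ^ k ∂betaMeasure a b = ascFact a k / ascFact (a + b) k := by
  have hkernel : ∀ u ∈ Set.Ioo (0 : ℝ) 1,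
      u ^ (a - 1) * (1 - u) ^ (b - 1) * u ^ k = u ^ (a + k - 1) * (1 - u) ^ (b - 1) := by
    intro u hu
    rw [add_sub_right_comm, Real.rpow_add_natCast hu.1.ne']
    ring
  rw [integral_betaMeasure ha hb, setIntegral_congr_fun measurableSet_Ioo hkernel,
    integral_betaKernel (by positivity) hb, beta_add_natCast ha hb,
    mul_comm _ (beta a b), inv_mul_cancel_left₀ (beta_pos ha hb).ne']

lemma mgf_id_betaMeasure (ha : 0 < a) (hb : 0 < b) (z : ℝ) :
    mgf id (betaMeasure a b) z = kummerM a (a + b) z := by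
  have := isProbabilityMeasureBeta ha hb
  have hsum : HasSum (fun k : ℕ => ∫ u, (z * u) ^ k / k.factorial ∂betaMeasure a b)
      (∫ u, Real.exp (z * u) ∂betaMeasure a b) := by
    refine hasSum_integral_of_dominated_convergence (fun k _ => |z| ^ k / k.factorial)
      (fun k => by fun_prop) (fun k => ?_) (ae_of_all _ fun _ => Real.summable_pow_div_factorial _)
      (integrable_const _) (ae_of_all _ fun u => ?_)
    · filter_upwards [ae_mem_Ioo_betaMeasure a b] with u hu
      rw [norm_div, norm_pow, norm_mul, Real.norm_natCast, Real.norm_of_nonneg hu.1.le,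
        Real.norm_eq_abs]
      have hu0 := hu.1.le
      gcongr
      exact mul_le_of_le_one_right (abs_nonneg z) hu.2.le
    · rw [Real.exp_eq_exp_ℝ]
      exact NormedSpace.expSeries_div_hasSum_exp (z * u)
  have hterm : ∀ k : ℕ, ∫ u, (z * u) ^ k / k.factorial ∂betaMeasure a b =
      ascFact a k / ascFact (a + b) k * z ^ k / k.factorial := by
    intro k
    simp only [mul_pow, integral_div, integral_const_mul, integral_pow_betaMeasure ha hb]
    ring
  simp only [hterm] at hsum
  exact hsum.tsum_eq.symm

lemma kummerM_pos (ha : 0 < a) (hb : 0 < b) (z : ℝ) : 0 < kummerM a (a + b) z := by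
  have := isProbabilityMeasureBeta ha hb
  rw [← mgf_id_betaMeasure ha hb]
  exact mgf_pos (integrable_exp_mul_of_mem_Icc aemeasurable_id
    ((ae_mem_Ioo_betaMeasure a b).mono fun _ hu => Set.Ioo_subset_Icc_self hu))

lemma image_div_one_add_Ioi : (fun t : ℝ => t / (1 + t)) '' Set.Ioi 0 = Set.Ioo 0 1 := by
  ext u
  constructor
  · rintro ⟨t, ht : 0 < t, rfl⟩
    exact ⟨by positivity, (div_lt_one (by positivity)).2 (by linarith)⟩
  · rintro ⟨hu0, hu1⟩
    have hu : 0 < 1 - u := sub_pos.2 hu1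
    refine ⟨u / (1 - u), div_pos hu0 hu, ?_⟩
    dsimp only
    field_simp
    ring

lemma integral_Ioi_rpow_mul_comp_div (a b : ℝ) (f : ℝ → ℝ) :
    ∫ t in Set.Ioi 0, t ^ (a - 1) * (1 + t) ^ (-(a + b)) * f (t / (1 + t)) =
      ∫ u in Set.Ioo 0 1, u ^ (a - 1) * (1 - u) ^ (b - 1) * f u := by
  have hinj : Set.InjOn (fun t : ℝ => t / (1 + t)) (Set.Ioi 0) := by
    intro s (hs : 0 < s) t (ht : 0 < t) hst
    dsimp only at hst
    field_simp at hst
    linarith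
  have hderiv : ∀ t ∈ Set.Ioi (0 : ℝ),
      HasDerivWithinAt (fun t : ℝ => t / (1 + t)) ((1 + t) ^ 2)⁻¹ (Set.Ioi 0) t := by
    intro t (ht : 0 < t)
    have hone : (1 + t) ≠ 0 := by positivity
    refine (((hasDerivAt_id' t).div ((hasDerivAt_id' t).const_add 1) hone).congr_deriv
      ?_).hasDerivWithinAt
    rw [div_eq_mul_inv]
    ring
  rw [← image_div_one_add_Ioi,
    integral_image_eq_integral_abs_deriv_smul measurableSet_Ioi hderiv hinj]
  refine setIntegral_congr_fun measurableSet_Ioi fun t (ht : 0 < t) => ?_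
  have hone : 0 < 1 + t := by positivity
  have hsub : 1 - t / (1 + t) = (1 + t)⁻¹ := by field_simp; ring
  have hpow : (1 + t) ^ (-(a + b)) =
      ((1 + t) ^ 2)⁻¹ * ((1 + t) ^ (a - 1))⁻¹ * ((1 + t) ^ (b - 1))⁻¹ := by
    rw [← Real.rpow_natCast, ← Real.rpow_neg hone.le, ← Real.rpow_neg hone.le,
      ← Real.rpow_neg hone.le, ← Real.rpow_add hone, ← Real.rpow_add hone]
    congr 1
    push_cast
    ring
  simp only [smul_eq_mul, abs_of_pos (show 0 < ((1 + t) ^ 2)⁻¹ by positivity), hsub, hpow,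
    Real.div_rpow ht.le hone.le, Real.inv_rpow hone.le]
  ring

lemma integral_Ioi_rpow_mul_exp_mul_div (ha : 0 < a) (hb : 0 < b) (z : ℝ) :
    ∫ t in Set.Ioi 0, t ^ (a - 1) * (1 + t) ^ (-(a + b)) * Real.exp (z * (t / (1 + t))) =
      beta a b * kummerM a (a + b) z := by
  rw [integral_Ioi_rpow_mul_comp_div a b fun u => Real.exp (z * u), ← mgf_id_betaMeasure ha hb,
    mgf, integral_betaMeasure ha hb, mul_inv_cancel_left₀ (beta_pos ha hb).ne']
  rfl

end BetaMeasure

section Subordination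

variable {κ : ℝ}

lemma integral_Ioi_rpow_mul_exp_neg_mul_sq (hκ : 0 < κ) {r : ℝ} (hr : 0 < r) :
    ∫ t in Set.Ioi 0, t ^ (1 / 2 - 1 : ℝ) * Real.exp (-(κ * r ^ 2 * t)) =
      √(Real.pi / κ) * r⁻¹ := by
  rw [Real.integral_rpow_mul_exp_neg_mul_Ioi (by norm_num) (by positivity),
    Real.Gamma_one_half_eq, ← Real.sqrt_eq_rpow, one_div, Real.sqrt_inv, Real.sqrt_mul hκ.le,
    Real.sqrt_sq hr.le, Real.sqrt_div' _ hκ.le]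
  field_simp

lemma integrableOn_rpow_mul_const_mul_exp (hκ : 0 < κ) {c r : ℝ} (hc : |c| ≤ r) :
    IntegrableOn (fun t => t ^ (1 / 2 - 1 : ℝ) * (c * Real.exp (-(κ * r ^ 2 * t))))
      (Set.Ioi 0) := by
  obtain rfl | hr := ((abs_nonneg c).trans hc).eq_or_lt
  · simp [abs_nonpos_iff.1 hc]
  · have hint : IntegrableOn (fun t => t ^ (1 / 2 - 1 : ℝ) * Real.exp (-(κ * r ^ 2 * t)))
        (Set.Ioi 0) := by
      refine Integrable.of_integral_ne_zero ?_
      rw [integral_Ioi_rpow_mul_exp_neg_mul_sq hκ hr]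
      have := Real.pi_pos
      positivity
    simpa only [IntegrableOn, mul_left_comm] using hint.const_mul c

lemma integral_Ioi_rpow_mul_const_mul_exp (hκ : 0 < κ) {c r : ℝ} (hc : |c| ≤ r) :
    ∫ t in Set.Ioi 0, t ^ (1 / 2 - 1 : ℝ) * (c * Real.exp (-(κ * r ^ 2 * t))) =
      √(Real.pi / κ) * (r⁻¹ * c) := by
  obtain rfl | hr := ((abs_nonneg c).trans hc).eq_or_lt
  · simp [abs_nonpos_iff.1 hc]
  · simp only [mul_left_comm _ c]
    rw [integral_const_mul, integral_Ioi_rpow_mul_exp_neg_mul_sq hκ hr]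
    ring

lemma abs_inv_mul_le_one {c r : ℝ} (hc : |c| ≤ r) : |r⁻¹ * c| ≤ 1 := by
  have hr := (abs_nonneg c).trans hc
  rw [abs_mul, abs_inv, abs_of_nonneg hr]
  exact inv_mul_le_one_of_le₀ hc hr

lemma integral_inv_mul_eq_integral_Ioi {α : Type*} [MeasurableSpace α] {μ : Measure α}
    [IsFiniteMeasure μ] {f r : α → ℝ} (hf : Measurable f) (hr : Measurable r)
    (hfr : ∀ x, |f x| ≤ r x) (hκ : 0 < κ) :
    ∫ x, (r x)⁻¹ * f x ∂μ = √(κ / Real.pi) * ∫ t in Set.Ioi 0,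
      t ^ (1 / 2 - 1 : ℝ) * ∫ x, f x * Real.exp (-(κ * r x ^ 2 * t)) ∂μ := by
  set F : α → ℝ → ℝ := fun x t => t ^ (1 / 2 - 1 : ℝ) * (f x * Real.exp (-(κ * r x ^ 2 * t)))
  have hnorm : ∀ x, ∫ t in Set.Ioi 0, ‖F x t‖ = √(Real.pi / κ) * |(r x)⁻¹ * f x| := by
    intro x
    rw [abs_mul, abs_inv, abs_of_nonneg ((abs_nonneg _).trans (hfr x)),
      ← integral_Ioi_rpow_mul_const_mul_exp hκ ((abs_abs (f x)).trans_le (hfr x))]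
    refine setIntegral_congr_fun measurableSet_Ioi fun t (ht : 0 < t) => ?_
    simp only [F, norm_mul, Real.norm_eq_abs, Real.abs_exp, abs_of_pos (Real.rpow_pos_of_pos ht _)]
  have hF : Integrable (Function.uncurry F) (μ.prod (volume.restrict (Set.Ioi 0))) := by
    refine (integrable_prod_iff ?_).2
      ⟨ae_of_all _ fun x => integrableOn_rpow_mul_const_mul_exp hκ (hfr x), ?_⟩
    · refine Measurable.aestronglyMeasurable ?_
      simp only [F, Function.uncurry_def]
      fun_prop
    · simp only [Function.uncurry_apply_pair, hnorm]
      refine (Integrable.of_bound (C := 1) (by fun_prop) (ae_of_all _ fun x => ?_)).const_mul _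
      rw [Real.norm_eq_abs, abs_abs]
      exact abs_inv_mul_le_one (hfr x)
  have hconst : √(κ / Real.pi) * √(Real.pi / κ) = 1 := by
    rw [← Real.sqrt_mul (by positivity), div_mul_div_cancel₀ Real.pi_ne_zero, div_self hκ.ne',
      Real.sqrt_one]
  calc ∫ x, (r x)⁻¹ * f x ∂μ
      = √(κ / Real.pi) * ∫ x, (∫ t in Set.Ioi 0, F x t) ∂μ := by
        simp only [F, integral_Ioi_rpow_mul_const_mul_exp hκ (hfr _), integral_const_mul]
        rw [← mul_assoc, hconst, one_mul]
    _ = _ := by simp only [integral_integral_swap hF, F, integral_const_mul]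

end Subordination

section GaussianTilting

open scoped NNReal

lemma gaussianPDFReal_mul_exp_neg_mul (m x : ℝ) {v : ℝ≥0} (hv : v ≠ 0) (t : ℝ≥0) :
    gaussianPDFReal m v x * Real.exp (-((2 * v : ℝ)⁻¹ * x ^ 2 * t)) =
      (√(1 + t))⁻¹ * Real.exp (-(2 * v : ℝ)⁻¹ * m ^ 2 * (t / (1 + t))) *
        gaussianPDFReal (m / (1 + t)) (v / (1 + t)) x := by
  have : (0 : ℝ) < v := by positivity
  have hsqrt : (√(2 * Real.pi * v))⁻¹ =
      (√(1 + t))⁻¹ * (√(2 * Real.pi * (v / (1 + t))))⁻¹ := by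
    rw [← mul_inv, ← Real.sqrt_mul (by positivity)]
    congr 2
    field_simp
  simp only [gaussianPDFReal, NNReal.coe_div, NNReal.coe_add, NNReal.coe_one]
  rw [hsqrt, mul_assoc _ _ (Real.exp _), ← Real.exp_add, mul_mul_mul_comm, ← Real.exp_add]
  congr 2
  field_simp
  ring

lemma integral_mul_exp_gaussianReal (m : ℝ) {v : ℝ≥0} (hv : v ≠ 0) (t : ℝ≥0) (h : ℝ → ℝ) :
    ∫ x, h x * Real.exp (-((2 * v : ℝ)⁻¹ * x ^ 2 * t)) ∂gaussianReal m v =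
      (√(1 + t))⁻¹ * Real.exp (-(2 * v : ℝ)⁻¹ * m ^ 2 * (t / (1 + t))) *
        ∫ x, h x ∂gaussianReal (m / (1 + t)) (v / (1 + t)) := by
  rw [integral_gaussianReal_eq_integral_smul hv, integral_gaussianReal_eq_integral_smul
    (by positivity), ← integral_const_mul]
  refine integral_congr_ae (ae_of_all _ fun x => ?_)
  simp only [smul_eq_mul]
  rw [mul_left_comm, gaussianPDFReal_mul_exp_neg_mul m x hv]
  ring

lemma integral_eval_mul_exp_pi_gaussianReal {ι : Type*} [Fintype ι] (m : ι → ℝ) {v : ℝ≥0}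
    (hv : v ≠ 0) (t : ℝ≥0) (i : ι) :
    ∫ x, x i * Real.exp (-((2 * v : ℝ)⁻¹ * (∑ j, x j ^ 2) * t))
        ∂Measure.pi (fun j => gaussianReal (m j) v) =
      m i / (1 + t) * (√(1 + t))⁻¹ ^ Fintype.card ι *
        Real.exp (-(2 * v : ℝ)⁻¹ * (∑ j, m j ^ 2) * (t / (1 + t))) := by
  classical
  have hprod : ∀ x : ι → ℝ, x i * Real.exp (-((2 * v : ℝ)⁻¹ * (∑ j, x j ^ 2) * t)) =
      ∏ j, (if j = i then x j else 1) * Real.exp (-((2 * v : ℝ)⁻¹ * x j ^ 2 * t)) := by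
    intro x
    rw [Finset.prod_mul_distrib, Finset.prod_ite_eq' Finset.univ i, if_pos (Finset.mem_univ i),
      ← Real.exp_sum, Finset.sum_neg_distrib, Finset.mul_sum, Finset.sum_mul]
  have hmean : ∀ j, ∫ x, (if j = i then x else 1) ∂gaussianReal (m j / (1 + t)) (v / (1 + t)) =
      if j = i then m j / (1 + t) else 1 := by
    intro j
    split_ifs
    · exact integral_id_gaussianReal
    · simp
  simp only [hprod]
  rw [integral_fintype_prod_eq_prod fun j x =>
    (if j = i then x else 1) * Real.exp (-((2 * v : ℝ)⁻¹ * x ^ 2 * t))]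
  simp only [integral_mul_exp_gaussianReal _ hv, hmean]
  rw [Finset.prod_mul_distrib, Finset.prod_mul_distrib, Finset.prod_const, Finset.card_univ,
    Finset.prod_ite_eq' Finset.univ i, if_pos (Finset.mem_univ i), ← Real.exp_sum,
    ← Finset.sum_mul, ← Finset.mul_sum]
  ring

end GaussianTilting

section Law

open scoped NNReal

instance isProbabilityMeasure_stdGaussianPi (n : ℕ) : IsProbabilityMeasure (stdGaussianPi n) := by
  unfold stdGaussianPi; infer_instance

variable {n : ℕ}

lemma charFunDual_gaussianReal (m : ℝ) (v : ℝ≥0) (L : StrongDual ℝ ℝ) :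
    charFunDual (gaussianReal m v) L =
      Complex.exp (L 1 * m * Complex.I - v * (L 1 : ℂ) ^ 2 / 2) := by
  have hL : ∀ x, L x = L 1 * x := fun x => by
    rw [mul_comm, ← smul_eq_mul, ← map_smul, smul_eq_mul, mul_one]
  rw [← charFun_gaussianReal, charFun_apply_real, charFunDual_apply]
  exact integral_congr_ae (ae_of_all _ fun x => by simp only [hL x, Complex.ofReal_mul])

lemma charFunDual_stdGaussianPi (L : StrongDual ℝ (Fin n → ℝ)) :
    charFunDual (stdGaussianPi n) L = Complex.exp (-(∑ i, L (Pi.single i 1) ^ 2 : ℝ) / 2) := by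
  rw [stdGaussianPi, charFunDual_pi]
  simp only [charFunDual_gaussianReal, ← Complex.exp_sum]
  simp [neg_div, Finset.sum_div]

lemma sum_sq_apply_mulVec_single (A : Matrix (Fin n) (Fin n) ℝ) (L : (Fin n → ℝ) →ₗ[ℝ] ℝ) :
    ∑ j, L (A *ᵥ Pi.single j 1) ^ 2 =
      (fun i => L (Pi.single i 1)) ⬝ᵥ (A * Aᵀ) *ᵥ fun i => L (Pi.single i 1) := by
  set a : Fin n → ℝ := fun i => L (Pi.single i 1) with ha
  have hL : ∀ x, L x = a ⬝ᵥ x := by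
    intro x
    conv_lhs => rw [pi_eq_sum_univ' x]
    simp [ha, dotProduct, mul_comm]
  rw [← Matrix.mulVec_mulVec, Matrix.dotProduct_mulVec, Matrix.mulVec_transpose]
  simp only [hL, Matrix.dotProduct_mulVec, dotProduct_single_one, sq]
  rfl

lemma charFunDual_map_mulVec_stdGaussianPi (A : Matrix (Fin n) (Fin n) ℝ)
    (L : StrongDual ℝ (Fin n → ℝ)) :
    charFunDual ((stdGaussianPi n).map (A *ᵥ ·)) L = Complex.exp
      (-((fun i => L (Pi.single i 1)) ⬝ᵥ (A * Aᵀ) *ᵥ fun i => L (Pi.single i 1) : ℝ) / 2) := by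
  have hsum := sum_sq_apply_mulVec_single A (L : (Fin n → ℝ) →ₗ[ℝ] ℝ)
  exact (charFunDual_map (LinearMap.toContinuousLinearMap A.mulVecLin) L).trans
    ((charFunDual_stdGaussianPi _).trans (congrArg (fun s : ℝ => Complex.exp (-s / 2)) hsum))

lemma map_mulVec_stdGaussianPi_congr {A B : Matrix (Fin n) (Fin n) ℝ} (h : A * Aᵀ = B * Bᵀ) :
    (stdGaussianPi n).map (A *ᵥ ·) = (stdGaussianPi n).map (B *ᵥ ·) := by
  refine Measure.ext_of_charFunDual (funext fun L => ?_)
  rw [charFunDual_map_mulVec_stdGaussianPi, charFunDual_map_mulVec_stdGaussianPi, h]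

lemma map_affine_stdGaussianPi_congr (m : Fin n → ℝ) {A B : Matrix (Fin n) (Fin n) ℝ}
    (h : A * Aᵀ = B * Bᵀ) :
    (stdGaussianPi n).map (fun x => m + A *ᵥ x) = (stdGaussianPi n).map (fun x => m + B *ᵥ x) := by
  have hmap := congrArg (Measure.map (m + ·)) (map_mulVec_stdGaussianPi_congr h)
  rwa [Measure.map_map (by fun_prop) (by fun_prop), Measure.map_map (by fun_prop) (by fun_prop)]
    at hmap

lemma map_affine_stdGaussianPi (m : Fin n → ℝ) {A : Matrix (Fin n) (Fin n) ℝ} {v : ℝ≥0}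
    (hA : A * Aᵀ = (v : ℝ) • (1 : Matrix (Fin n) (Fin n) ℝ)) :
    (stdGaussianPi n).map (fun x => m + A *ᵥ x) = Measure.pi fun i => gaussianReal (m i) v := by
  have hsqrt : A * Aᵀ = (√v • (1 : Matrix (Fin n) (Fin n) ℝ)) * (√v • 1)ᵀ := by
    rw [hA, Matrix.transpose_smul, Matrix.transpose_one, Matrix.smul_mul, Matrix.one_mul,
      smul_smul, Real.mul_self_sqrt v.coe_nonneg]
  have hcoord : ∀ i, (gaussianReal 0 1).map (fun x => m i + √v * x) = gaussianReal (m i) v := by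
    intro i
    have h := Measure.map_map (μ := gaussianReal 0 1) (g := (m i + ·)) (f := (√v * ·))
      (by fun_prop) (by fun_prop)
    rw [gaussianReal_map_const_mul, gaussianReal_map_const_add, mul_zero, zero_add, mul_one] at h
    refine h.symm.trans (congrArg _ (NNReal.eq ?_))
    exact Real.sq_sqrt v.coe_nonneg
  simp only [map_affine_stdGaussianPi_congr m hsqrt, ← hcoord]
  rw [stdGaussianPi, ← Measure.pi_map_pi (fun i => by fun_prop)]
  simp only [Matrix.smul_mulVec, Matrix.one_mulVec]
  rfl

end Law

section EuclNorm

variable {n : ℕ}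

lemma euclNorm_sq (x : Fin n → ℝ) : euclNorm x ^ 2 = ∑ i, x i ^ 2 :=
  Real.sq_sqrt (Finset.sum_nonneg fun _ _ => sq_nonneg _)

lemma abs_apply_le_euclNorm (x : Fin n → ℝ) (i : Fin n) : |x i| ≤ euclNorm x :=
  Real.abs_le_sqrt <|
    Finset.single_le_sum (f := fun j => x j ^ 2) (fun _ _ => sq_nonneg _) (Finset.mem_univ i)

lemma euclNorm_pos {x : Fin n → ℝ} (hx : x ≠ 0) : 0 < euclNorm x := by
  obtain ⟨i, hi⟩ := Function.ne_iff.1 hx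
  exact (abs_pos.2 hi).trans_le (abs_apply_le_euclNorm x i)

lemma euclNorm_smul (c : ℝ) (x : Fin n → ℝ) : euclNorm (c • x) = |c| * euclNorm x := by
  simp only [euclNorm, Pi.smul_apply, smul_eq_mul, mul_pow, ← Finset.mul_sum]
  rw [Real.sqrt_mul (sq_nonneg c), Real.sqrt_sq_eq_abs]

@[fun_prop]
lemma measurable_euclNorm : Measurable (euclNorm (n := n)) := by
  unfold euclNorm
  fun_prop

end EuclNorm

section MeanDirection

variable {Ω : Type*} [MeasurableSpace Ω] {P : Measure Ω} {n : ℕ} {X : Ω → Fin n → ℝ}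
  {c : ℝ} {u : Fin n → ℝ}

lemma MRL_eq_of_meanVec_eq_smul (hX : meanVec P X = c • u) (hc : 0 < c) (hu : euclNorm u = 1) :
    MRL P X = c := by
  rw [MRL, hX, euclNorm_smul, abs_of_pos hc, hu, mul_one]

lemma MD_eq_of_meanVec_eq_smul (hX : meanVec P X = c • u) (hc : 0 < c) (hu : euclNorm u = 1) :
    MD P X = u := by
  rw [MD, hX, euclNorm_smul, abs_of_pos hc, hu, mul_one, inv_smul_smul₀ hc.ne']

end MeanDirection

section ProjectedGaussian

open scoped NNReal

variable {n : ℕ}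

lemma varrho_eq_beta (n : ℕ) (x : ℝ) :
    varrho n x = x / √(2 * Real.pi) * (beta (1 / 2) ((n + 1) / 2) *
      kummerM (1 / 2) (1 / 2 + (n + 1) / 2) (-x ^ 2 / 2)) := by
  have hpi : √Real.pi ≠ 0 := (Real.sqrt_pos.2 Real.pi_pos).ne'
  rw [varrho, beta, Real.Gamma_one_half_eq, Real.sqrt_mul zero_le_two,
    show (1 / 2 + (n + 1) / 2 : ℝ) = (n + 2) / 2 by ring]
  field_simp

lemma varrho_pos (n : ℕ) {x : ℝ} (hx : 0 < x) : 0 < varrho n x := by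
  have hb : (0 : ℝ) < (n + 1) / 2 := by positivity
  have hM := kummerM_pos one_half_pos hb (-x ^ 2 / 2)
  have hB := beta_pos one_half_pos hb
  rw [varrho_eq_beta]
  positivity

lemma rpow_neg_half_add_half_natCast_succ {y : ℝ} (hy : 0 < y) (n : ℕ) :
    y ^ (-(1 / 2 + (n + 1) / 2) : ℝ) = y⁻¹ * (√y)⁻¹ ^ n := by
  rw [Real.sqrt_eq_rpow, ← Real.rpow_neg hy.le, ← Real.rpow_mul_natCast hy.le,
    ← Real.rpow_neg_one, ← Real.rpow_add hy]
  ring_nf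

lemma integral_inv_euclNorm_mul_eval_pi_gaussianReal (m : Fin n → ℝ) {v : ℝ≥0} (hv : v ≠ 0)
    (i : Fin n) :
    ∫ x, (euclNorm x)⁻¹ * x i ∂Measure.pi (fun j => gaussianReal (m j) v) =
      √((2 * v : ℝ)⁻¹ / Real.pi) * (m i * (beta (1 / 2) ((n + 1) / 2) *
        kummerM (1 / 2) (1 / 2 + (n + 1) / 2) (-(euclNorm m / √v) ^ 2 / 2))) := by
  have htilt : ∀ t ∈ Set.Ioi (0 : ℝ), t ^ (1 / 2 - 1 : ℝ) *
      ∫ x, x i * Real.exp (-((2 * v : ℝ)⁻¹ * euclNorm x ^ 2 * t))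
        ∂Measure.pi (fun j => gaussianReal (m j) v) =
      m i * (t ^ (1 / 2 - 1 : ℝ) * (1 + t) ^ (-(1 / 2 + (n + 1) / 2) : ℝ) *
        Real.exp (-(euclNorm m / √v) ^ 2 / 2 * (t / (1 + t)))) := by
    intro t (ht : 0 < t)
    lift t to ℝ≥0 using ht.le
    have hexponent : -(2 * v : ℝ)⁻¹ * euclNorm m ^ 2 = -(euclNorm m / √v) ^ 2 / 2 := by
      rw [div_pow, Real.sq_sqrt v.coe_nonneg]
      ring
    simp only [euclNorm_sq, integral_eval_mul_exp_pi_gaussianReal m hv, Fintype.card_fin,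
      rpow_neg_half_add_half_natCast_succ (show (0 : ℝ) < 1 + t by positivity)]
    rw [← euclNorm_sq, hexponent]
    ring
  rw [integral_inv_mul_eq_integral_Ioi (by fun_prop) measurable_euclNorm
    (fun x => abs_apply_le_euclNorm x i) (by positivity : 0 < (2 * v : ℝ)⁻¹),
    setIntegral_congr_fun measurableSet_Ioi htilt, integral_const_mul,
    integral_Ioi_rpow_mul_exp_mul_div one_half_pos (by positivity)]

lemma IsGaussianVec.map_eq_pi {Ω : Type*} [MeasurableSpace Ω] {P : Measure Ω}
    {ξ : Ω → Fin n → ℝ} {m : Fin n → ℝ} {v : ℝ≥0}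
    (h : IsGaussianVec P ξ m ((v : ℝ) • (1 : Matrix (Fin n) (Fin n) ℝ))) :
    P.map ξ = Measure.pi fun i => gaussianReal (m i) v := by
  obtain ⟨A, hA, hmap⟩ := h
  rw [hmap, map_affine_stdGaussianPi m hA]

lemma IsGaussianVec.meanVec_normalize {Ω : Type*} [MeasurableSpace Ω] {P : Measure Ω}
    {ξ : Ω → Fin n → ℝ} {m : Fin n → ℝ} {v : ℝ≥0} (hm : m ≠ 0) (hv : v ≠ 0)
    (h : IsGaussianVec P ξ m ((v : ℝ) • (1 : Matrix (Fin n) (Fin n) ℝ))) :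
    meanVec P (fun ω => (euclNorm (ξ ω))⁻¹ • ξ ω) =
      varrho n (euclNorm m / √v) • (euclNorm m)⁻¹ • m := by
  have hlaw := h.map_eq_pi
  have hξ : AEMeasurable ξ P := by
    refine AEMeasurable.of_map_ne_zero ?_
    rw [hlaw]
    exact IsProbabilityMeasure.ne_zero _
  ext i
  have hcoord : meanVec P (fun ω => (euclNorm (ξ ω))⁻¹ • ξ ω) i =
      ∫ x, (euclNorm x)⁻¹ * x i ∂P.map ξ := by
    rw [integral_map hξ (by fun_prop)]
    rfl
  have hconst : √((2 * v : ℝ)⁻¹ / Real.pi) = (√(2 * Real.pi))⁻¹ * (√v)⁻¹ := by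
    rw [← mul_inv, ← Real.sqrt_mul (by positivity), ← Real.sqrt_inv]
    congr 1
    field_simp
  have := euclNorm_pos hm
  rw [hcoord, hlaw, integral_inv_euclNorm_mul_eval_pi_gaussianReal m hv, varrho_eq_beta, hconst]
  simp only [Pi.smul_apply, smul_eq_mul]
  field_simp

end ProjectedGaussian

/-- Presnell et al.: MD and MRL of the projected normal `ξ/‖ξ‖`. -/
theorem stmt9 {Ω : Type*} [MeasurableSpace Ω] (P : Measure Ω) [IsProbabilityMeasure P]
    {n : ℕ} (ν : Fin n → ℝ) (lam : ℝ) (hν : ν ≠ 0) (hlam : 0 < lam)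
    (ξ : Ω → Fin n → ℝ)
    (hgauss : IsGaussianVec P ξ ν (lam ^ 2 • (1 : Matrix (Fin n) (Fin n) ℝ))) :
    MD P (fun ω => (euclNorm (ξ ω))⁻¹ • ξ ω) = (euclNorm ν)⁻¹ • ν ∧
    MRL P (fun ω => (euclNorm (ξ ω))⁻¹ • ξ ω) = varrho n (euclNorm ν / lam) := by
  lift lam to NNReal using hlam.le
  have hlam0 : lam ^ 2 ≠ 0 := pow_ne_zero 2 (NNReal.coe_pos.1 hlam).ne'
  have hmean := IsGaussianVec.meanVec_normalize (v := lam ^ 2) hν hlam0 (by exact_mod_cast hgauss)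
  rw [NNReal.coe_pow, Real.sqrt_sq lam.coe_nonneg] at hmean
  have hνpos := euclNorm_pos hν
  have hvarrho : 0 < varrho n (euclNorm ν / lam) := varrho_pos n (div_pos hνpos hlam)
  have hunit : euclNorm ((euclNorm ν)⁻¹ • ν) = 1 := by
    rw [euclNorm_smul, abs_of_pos (inv_pos.2 hνpos), inv_mul_cancel₀ hνpos.ne']
  exact ⟨MD_eq_of_meanVec_eq_smul hmean hvarrho hunit,
    MRL_eq_of_meanVec_eq_smul hmean hvarrho hunit⟩
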